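/- Let M : ℝ² → ℝ be a smooth function of (y,T) with M(y,T) ≠ 0 for all (y,T). Then the identity (1/M)_T = (M·M_yy + M_y² − 3M)_y holds on ℝ² if and only if M satisfies the RKdV equation M_T + (M³(M_yy − 1))_y = 0 on ℝ². -/

import Mathlib

noncomputable section

/-- Partial derivative of `f` with respect to its first argument. -/
def d1 (f : ℝ → ℝ → ℝ) : ℝ → ℝ → ℝ := fun a b => deriv (fun a' => f a' b) a

/-- Partial derivative of `f` with respect to its second argument. -/
def d2 (f : ℝ → ℝ → ℝ) : ℝ → ℝ → ℝ := fun a b => deriv (fun b' => f a b') b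

/-- Smoothness of a two-variable real function. -/
def Smooth2 (f : ℝ → ℝ → ℝ) : Prop := ContDiff ℝ (⊤ : ℕ∞) (fun p : ℝ × ℝ => f p.1 p.2)

/-!
Since `(M³(M_yy − 1))_y = M² (M M_yy + M_y² − 3M)_y` and `M_T = −M² (1/M)_T`, the left-hand side of
the RKdV equation is `−M²` times the difference of the two sides of the compatibility identity.
-/

section DerivIdentity

variable {𝕜 𝔸 : Type*} [NontriviallyNormedField 𝕜] [NormedCommRing 𝔸] [NormedAlgebra 𝕜 𝔸]
  {u : 𝕜 → 𝔸} {x : 𝕜}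

theorem deriv_pow_three_mul_deriv_deriv_sub_one (h₀ : DifferentiableAt 𝕜 u x)
    (h₁ : DifferentiableAt 𝕜 (deriv u) x) (h₂ : DifferentiableAt 𝕜 (deriv (deriv u)) x) :
    deriv (fun z => u z ^ 3 * (deriv (deriv u) z - 1)) x =
      u x ^ 2 * deriv (fun z => u z * deriv (deriv u) z + deriv u z ^ 2 - 3 * u z) x := by
  have deriv_flux : deriv (fun z => u z ^ 3 * (deriv (deriv u) z - 1)) x =
      3 * u x ^ 2 * deriv u x * (deriv (deriv u) x - 1) +
        u x ^ 3 * deriv (deriv (deriv u)) x := by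
    simpa using ((h₀.hasDerivAt.fun_pow 3).fun_mul (h₂.hasDerivAt.sub_const 1)).deriv
  have deriv_velocity :
      deriv (fun z => u z * deriv (deriv u) z + deriv u z ^ 2 - 3 * u z) x =
        deriv u x * deriv (deriv u) x + u x * deriv (deriv (deriv u)) x +
          2 * deriv u x * deriv (deriv u) x - 3 * deriv u x := by
    simpa using (((h₀.hasDerivAt.fun_mul h₂.hasDerivAt).fun_add
      (h₁.hasDerivAt.fun_pow 2)).fun_sub (h₀.hasDerivAt.const_mul 3)).deriv
  rw [deriv_flux, deriv_velocity]
  ring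

end DerivIdentity

section PartialDerivatives

variable {f : ℝ → ℝ → ℝ}

theorem d1_eq_fderiv {a b : ℝ} (hf : DifferentiableAt ℝ (fun p : ℝ × ℝ => f p.1 p.2) (a, b)) :
    d1 f a b = fderiv ℝ (fun p : ℝ × ℝ => f p.1 p.2) (a, b) (1, 0) := by
  have hasDerivAt_line : HasDerivAt (fun a' => (a', b)) ((1, 0) : ℝ × ℝ) a :=
    (hasDerivAt_id a).prodMk (hasDerivAt_const a b)
  exact (hf.hasFDerivAt.comp_hasDerivAt a hasDerivAt_line).deriv

theorem d2_one_div {a b : ℝ} (hf : DifferentiableAt ℝ (fun b' => f a b') b) (hne : f a b ≠ 0) :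
    d2 (fun a b => 1 / f a b) a b = -d2 f a b / f a b ^ 2 := by
  simpa only [d2, one_div] using deriv_fun_inv'' hf hne

theorem Smooth2.differentiableAt_fst (hf : Smooth2 f) (a b : ℝ) :
    DifferentiableAt ℝ (fun a' => f a' b) a :=
  (hf.comp (contDiff_id.prodMk contDiff_const)).differentiable (by simp) a

theorem Smooth2.differentiableAt_snd (hf : Smooth2 f) (a b : ℝ) :
    DifferentiableAt ℝ (fun b' => f a b') b :=
  (hf.comp (contDiff_const.prodMk contDiff_id)).differentiable (by simp) b

theorem Smooth2.smooth2_d1 (hf : Smooth2 f) : Smooth2 (d1 f) := by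
  have d1_eq (a b : ℝ) : d1 f a b = fderiv ℝ (fun p : ℝ × ℝ => f p.1 p.2) (a, b) (1, 0) :=
    d1_eq_fderiv (hf.differentiable (by simp) (a, b))
  simp only [Smooth2, d1_eq]
  exact (hf.fderiv_right (by simp)).clm_apply contDiff_const

end PartialDerivatives

theorem RKdV_compatibility_iff_general {M : ℝ → ℝ → ℝ} {y T : ℝ}
    (h₀ : DifferentiableAt ℝ (fun y => M y T) y)
    (h₁ : DifferentiableAt ℝ (fun y => d1 M y T) y)
    (h₂ : DifferentiableAt ℝ (fun y => d1 (d1 M) y T) y)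
    (hT : DifferentiableAt ℝ (fun T => M y T) T) (hne : M y T ≠ 0) :
    d2 (fun y T => 1 / M y T) y T =
        d1 (fun y T => M y T * d1 (d1 M) y T + (d1 M y T) ^ 2 - 3 * M y T) y T
    ↔ d2 M y T + d1 (fun y T => (M y T) ^ 3 * (d1 (d1 M) y T - 1)) y T = 0 := by
  have time_deriv : d2 M y T = -M y T ^ 2 * d2 (fun y T => 1 / M y T) y T := by
    rw [d2_one_div hT hne]
    field_simp
  have flux_deriv : d1 (fun y T => (M y T) ^ 3 * (d1 (d1 M) y T - 1)) y T =
      M y T ^ 2 * d1 (fun y T => M y T * d1 (d1 M) y T + (d1 M y T) ^ 2 - 3 * M y T) y T :=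
    deriv_pow_three_mul_deriv_deriv_sub_one h₀ h₁ h₂
  rw [time_deriv, flux_deriv, neg_mul, neg_add_eq_zero, mul_right_inj' (pow_ne_zero 2 hne)]

/-- for nowhere-vanishing smooth `M(y,T)`, the compatibility identity
`(1/M)_T = (M·M_yy + M_y² − 3M)_y` holds iff `M` solves RKdV. -/
theorem RKdV_compatibility_iff (M : ℝ → ℝ → ℝ)
    (hM : Smooth2 M) (hne : ∀ y T, M y T ≠ 0) :
    (∀ y T, d2 (fun y T => 1 / M y T) y T =
        d1 (fun y T => M y T * d1 (d1 M) y T + (d1 M y T) ^ 2 - 3 * M y T) y T)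
    ↔ (∀ y T, d2 M y T
        + d1 (fun y T => (M y T) ^ 3 * (d1 (d1 M) y T - 1)) y T = 0) :=
  forall₂_congr fun y T =>
    RKdV_compatibility_iff_general (hM.differentiableAt_fst y T)
      (hM.smooth2_d1.differentiableAt_fst y T) (hM.smooth2_d1.smooth2_d1.differentiableAt_fst y T)
      (hM.differentiableAt_snd y T) (hne y T)
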